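/- arXiv:math/0703532 — 2 statements merged into one kernel-verified Lean document; each statement's English description precedes it below -/
import Mathlib

section
/- Let Γ be a finite group and consider a walk setup on Γ (symmetric primitive adjacency matrix A : Fin n → Fin n → ℕ with vertex labels t : Fin n → Γ) such that the set {t i : i : Fin n} generates Γ, and such that for every group homomorphism ρ : Γ →* ℂˣ with ρ not identically 1 there exist indices i, j with ρ (t i) ≠ ρ (t j). Then there exist constants C > 0 and c with 0 < c < 1 such that for every N ≥ 1 and every γ ∈ Γ, |P_N(γ) − 1/|Γ|| ≤ C · c^N; in particular the distributions P_N converge to the uniform distribution on Γ. -/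
open scoped BigOperators

/-!
Lift a walk on `V` to the walk on `V × G` which also records the product of the labels read so far.
Its transfer matrix `S` is the skew product below; the entries of `S ^ N` count the walks of length
`N` by endpoints and product, and summing them over a fibre `G` gives `A ^ N`.

If the labels generate `G`, then `S` is irreducible: going back and forth along an edge returns to
the starting point after `2 |G|` steps, so every step of the lifted walk can be undone, hence two
vertices joined by a walk of even length are connected in the lift without changing the
`G`-coordinate, and primitivity provides such walks between all vertices. Applied to the labels
`(t i, 1)` in `G × ℤ/L`, which generate because no nontrivial character of `G` is constant on the
labels, this gives connections in the lift to `V × G` of length divisible by `L`; with the loops of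
length `L = 2 |G|` it follows that `S` is primitive.

Once `S ^ m` is positive, it dominates a small multiple `δ` of the fibrewise constant matrix
`A ^ m`. Fibrewise constant matrices do not see the deviation of `S ^ N` from equidistribution, so
every `m` further steps multiply that deviation by `1 - |G| δ` (Doeblin's argument).
-/

section NonnegativeMatrices

variable {ι R : Type*} [Fintype ι] [Ring R] [LinearOrder R] {M N : Matrix ι ι R}

theorem isPrimitive_of_isPrimitive_pow [DecidableEq ι] (hM : ∀ x y, 0 ≤ M x y) {k : ℕ}
    (hk : 0 < k) (h : (M ^ k).IsPrimitive) : M.IsPrimitive := by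
  obtain ⟨l, hl, hpos⟩ := h.exists_pos_pow
  exact ⟨hM, k * l, Nat.mul_pos hk hl, by simpa only [pow_mul] using hpos⟩

variable [IsStrictOrderedRing R]

theorem matrix_mul_apply_pos_iff (hM : ∀ x y, 0 ≤ M x y) (hN : ∀ x y, 0 ≤ N x y) {x z : ι} :
    0 < (M * N) x z ↔ ∃ y, 0 < M x y ∧ 0 < N y z := by
  rw [Matrix.mul_apply,
    Finset.sum_pos_iff_of_nonneg fun y _ => mul_nonneg (hM x y) (hN y z)]
  simp only [Finset.mem_univ, true_and, mul_pos_iff, (hM _ _).not_gt, false_and, or_false]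

variable [DecidableEq ι]

theorem matrix_pow_add_apply_pos (hM : ∀ x y, 0 ≤ M x y) {a b : ℕ} {x y z : ι}
    (hxy : 0 < (M ^ a) x y) (hyz : 0 < (M ^ b) y z) : 0 < (M ^ (a + b)) x z := by
  rw [pow_add, matrix_mul_apply_pos_iff (Matrix.pow_apply_nonneg hM a)
    (Matrix.pow_apply_nonneg hM b)]
  exact ⟨y, hxy, hyz⟩

theorem matrix_pow_apply_diag_pos (hM : ∀ x y, 0 ≤ M x y) {x : ι} (hx : 0 < M x x) (k : ℕ) :
    0 < (M ^ k) x x := by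
  induction k with
  | zero => simp
  | succ k ih => exact matrix_pow_add_apply_pos hM ih (by simpa using hx)

theorem reflTransGen_iff_exists_matrix_pow_pos (hM : ∀ x y, 0 ≤ M x y) {x y : ι} :
    Relation.ReflTransGen (fun x y => 0 < M x y) x y ↔ ∃ k, 0 < (M ^ k) x y := by
  constructor
  · intro h
    induction h with
    | refl => exact ⟨0, by simp⟩
    | tail _ hstep ih =>
      obtain ⟨k, hk⟩ := ih
      exact ⟨k + 1, matrix_pow_add_apply_pos hM hk (by simpa using hstep)⟩
  · rintro ⟨k, hk⟩
    induction k generalizing y with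
    | zero =>
      obtain rfl : x = y := by
        by_contra hne
        simp [hne] at hk
      exact .refl
    | succ k ih =>
      rw [pow_succ, matrix_mul_apply_pos_iff (Matrix.pow_apply_nonneg hM k) hM] at hk
      obtain ⟨z, hxz, hzy⟩ := hk
      exact (ih hxz).tail hzy

theorem isPrimitive_of_isIrreducible_of_diag_pos (hM : M.IsIrreducible) (hdiag : ∀ x, 0 < M x x) :
    M.IsPrimitive := by
  choose k _ hk using (Matrix.isIrreducible_iff_exists_pow_pos hM.nonneg).mp hM
  refine ⟨hM.nonneg, 1 + ∑ p : ι × ι, k p.1 p.2, by omega, fun x y => ?_⟩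
  have hle : k x y ≤ 1 + ∑ p : ι × ι, k p.1 p.2 :=
    (Finset.single_le_sum (f := fun p : ι × ι => k p.1 p.2) (fun _ _ => Nat.zero_le _)
      (Finset.mem_univ (x, y))).trans (Nat.le_add_left _ _)
  obtain ⟨r, hr⟩ := Nat.exists_eq_add_of_le' hle
  rw [hr]
  exact matrix_pow_add_apply_pos hM.nonneg (matrix_pow_apply_diag_pos hM.nonneg (hdiag x) r)
    (hk x y)

theorem exists_apply_pos_of_isPrimitive (hM : M.IsPrimitive) (x : ι) : ∃ y, 0 < M x y := by
  obtain ⟨k, hk, hpos⟩ := hM.exists_pos_pow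
  have hx := hpos x x
  rw [← Nat.succ_pred_eq_of_pos hk, pow_succ', matrix_mul_apply_pos_iff hM.nonneg
    (Matrix.pow_apply_nonneg hM.nonneg _)] at hx
  exact hx.imp fun _ => And.left

theorem sum_matrix_pow_pos_of_isPrimitive [Nonempty ι] (hM : M.IsPrimitive) (k : ℕ) :
    0 < ∑ x, ∑ y, (M ^ k) x y := by
  have hnonneg : ∀ x y, 0 ≤ (M ^ k) x y := Matrix.pow_apply_nonneg hM.nonneg k
  have hrow : ∀ x, ∃ y, 0 < (M ^ k) x y := by
    intro x
    induction k with
    | zero => exact ⟨x, by simp⟩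
    | succ k ih =>
      obtain ⟨y, hy⟩ := ih (Matrix.pow_apply_nonneg hM.nonneg k)
      obtain ⟨z, hz⟩ := exists_apply_pos_of_isPrimitive hM y
      exact ⟨z, matrix_pow_add_apply_pos hM.nonneg hy (by simpa using hz)⟩
  refine Finset.sum_pos (fun x _ => ?_) Finset.univ_nonempty
  obtain ⟨y, hy⟩ := hrow x
  exact Finset.sum_pos' (fun z _ => hnonneg x z) ⟨y, Finset.mem_univ y, hy⟩

theorem isPrimitive_map_natCast {A : Matrix ι ι ℕ} {k : ℕ} (hk : 0 < k)
    (hA : ∀ i j, 0 < (A ^ k) i j) : (A.map (Nat.cast : ℕ → R)).IsPrimitive := by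
  refine ⟨fun i j => Nat.cast_nonneg _, k, hk, fun i j => ?_⟩
  have hpow := Matrix.map_pow A (Nat.castRingHom R) k
  rw [Nat.coe_castRingHom] at hpow
  rw [← hpow]
  exact Nat.cast_pos.mpr (hA i j)

end NonnegativeMatrices

section Generation

variable {G V : Type*} [Group G] [Finite G] {t : V → G}

theorem normal_subgroup_eq_top_of_characters (hgen : Subgroup.closure (Set.range t) = ⊤)
    (hchar : ∀ ρ : G →* ℂˣ, (∃ γ, ρ γ ≠ 1) → ∃ i j, ρ (t i) ≠ ρ (t j))
    (K : Subgroup G) [K.Normal] (hK : ∀ i j, (t i)⁻¹ * t j ∈ K) : K = ⊤ := by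
  have hconst : ∀ i j, QuotientGroup.mk' K (t i) = QuotientGroup.mk' K (t j) := fun i j =>
    QuotientGroup.eq.mpr (hK i j)
  have hquot : Subgroup.closure (QuotientGroup.mk' K '' Set.range t) = ⊤ := by
    rw [← MonoidHom.map_closure, hgen,
      Subgroup.map_top_of_surjective _ (QuotientGroup.mk'_surjective K)]
  have hcomm : IsMulCommutative (Subgroup.closure (QuotientGroup.mk' K '' Set.range t)) := by
    refine Subgroup.isMulCommutative_closure ?_
    rintro _ ⟨_, ⟨i, rfl⟩, rfl⟩ _ ⟨_, ⟨j, rfl⟩, rfl⟩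
    rw [hconst i j]
  let _ : CommGroup (G ⧸ K) :=
    { (inferInstance : Group (G ⧸ K)) with
      mul_comm := fun x y => congrArg Subtype.val (hcomm.is_comm.comm
        ⟨x, hquot ▸ Subgroup.mem_top x⟩ ⟨y, hquot ▸ Subgroup.mem_top y⟩) }
  by_contra hne
  obtain ⟨p, hp⟩ : ∃ p, p ∉ K := by
    simpa only [Subgroup.eq_top_iff', not_forall] using hne
  obtain ⟨φ, hφ⟩ := CommGroup.exists_apply_ne_one_of_hasEnoughRootsOfUnity (G ⧸ K) ℂ
    (a := QuotientGroup.mk' K p) fun h => hp ((QuotientGroup.eq_one_iff p).mp h)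
  obtain ⟨i, j, hij⟩ := hchar (φ.comp (QuotientGroup.mk' K)) ⟨p, hφ⟩
  exact hij (congrArg φ (hconst i j))

theorem closure_range_prodMk_eq_top {Z : Type*} [Group Z] [Nonempty V] {z : Z}
    (hz : Subgroup.zpowers z = ⊤) (hgen : Subgroup.closure (Set.range t) = ⊤)
    (hchar : ∀ ρ : G →* ℂˣ, (∃ γ, ρ γ ≠ 1) → ∃ i j, ρ (t i) ≠ ρ (t j)) :
    Subgroup.closure (Set.range fun i => (t i, z)) = ⊤ := by
  set H := Subgroup.closure (Set.range fun i => (t i, z))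
  have hmem : ∀ i, (t i, z) ∈ H := fun i => Subgroup.subset_closure ⟨i, rfl⟩
  have hfst : H.map (MonoidHom.fst G Z) = ⊤ := by
    rw [MonoidHom.map_closure, ← Set.range_comp]
    exact hgen
  let K := H.comap (MonoidHom.inl G Z)
  have hnormal : K.Normal := by
    refine ⟨fun x hx g => ?_⟩
    obtain ⟨⟨_, s⟩, hs, rfl⟩ := hfst ▸ Subgroup.mem_top g
    simpa [K] using H.mul_mem (H.mul_mem hs hx) (H.inv_mem hs)
  have hK : K = ⊤ := normal_subgroup_eq_top_of_characters hgen hchar K fun i j => by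
    simpa [K] using H.mul_mem (H.inv_mem (hmem i)) (hmem j)
  have hinl : ∀ g, (g, 1) ∈ H := Subgroup.eq_top_iff' K |>.mp hK
  have hinr : Subgroup.zpowers z ≤ H.comap (MonoidHom.inr G Z) := by
    obtain ⟨i⟩ := ‹Nonempty V›
    rw [Subgroup.zpowers_le]
    simpa using H.mul_mem (H.inv_mem (hinl (t i))) (hmem i)
  rw [Subgroup.eq_top_iff']
  rintro ⟨g, s⟩
  simpa using H.mul_mem (hinl g) (hinr (hz ▸ Subgroup.mem_top s))

end Generation

/-- The transfer matrix of the lift to `V × G` of the walk with transfer matrix `A` on `V`: a step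
to the vertex `j` multiplies the `G`-coordinate by `t j` on the left. -/
def skewProduct {V G R : Type*} [Mul G] [DecidableEq G] [Zero R] (A : Matrix V V R) (t : V → G) :
    Matrix (V × G) (V × G) R :=
  Matrix.of fun x y => if y.2 = t y.1 * x.2 then A x.1 y.1 else 0

namespace skewProduct

section Entries

variable {V G R : Type*} [Mul G] [DecidableEq G] [Zero R] {A : Matrix V V R} {t : V → G}

theorem apply_mk (i j : V) (g h : G) :
    skewProduct A t (i, g) (j, h) = if h = t j * g then A i j else 0 :=
  rfl

variable [Preorder R]

theorem nonneg (hA : ∀ i j, 0 ≤ A i j) (x y : V × G) : 0 ≤ skewProduct A t x y := by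
  rw [apply_mk]
  split_ifs
  exacts [hA _ _, le_rfl]

theorem apply_pos_iff {i j : V} {g h : G} :
    0 < skewProduct A t (i, g) (j, h) ↔ 0 < A i j ∧ h = t j * g := by
  rw [apply_mk]
  split_ifs with heq <;> simp [heq]

end Entries

section Reachability

variable {V G R : Type*} [DecidableEq G] [Zero R] [Preorder R] {A : Matrix V V R} {t : V → G}

theorem reflTransGen_pow_mul [Monoid G] {i j : V} (hij : 0 < A i j) (hji : 0 < A j i) (n : ℕ)
    (g : G) :
    Relation.ReflTransGen (fun x y => 0 < skewProduct A t x y) (i, g)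
      (i, (t i * t j) ^ n * g) := by
  induction n with
  | zero => simpa using .refl
  | succ n ih =>
    have hforth : 0 < skewProduct A t (i, (t i * t j) ^ n * g)
        (j, t j * ((t i * t j) ^ n * g)) := apply_pos_iff.mpr ⟨hij, rfl⟩
    refine (ih.tail hforth).tail (apply_pos_iff.mpr ⟨hji, ?_⟩)
    simp only [pow_succ', mul_assoc]

variable [Group G] [Finite G]

theorem reflTransGen_swap_of_pos (hsymm : ∀ i j, 0 < A i j → 0 < A j i) {x y : V × G}
    (hxy : 0 < skewProduct A t x y) :
    Relation.ReflTransGen (fun x y => 0 < skewProduct A t x y) y x := by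
  obtain ⟨i, g⟩ := x
  obtain ⟨j, h⟩ := y
  obtain ⟨hij, rfl⟩ := apply_pos_iff.mp hxy
  have hback : 0 < skewProduct A t (j, t j * g) (i, t i * t j * g) :=
    apply_pos_iff.mpr ⟨hsymm _ _ hij, mul_assoc _ _ _⟩
  have hloop := reflTransGen_pow_mul (t := t) hij (hsymm _ _ hij) (Nat.card G - 1)
    (t i * t j * g)
  rw [← mul_assoc, ← pow_succ, Nat.sub_add_cancel Nat.card_pos, pow_card_eq_one',
    one_mul] at hloop
  exact .head hback hloop

theorem reflTransGen_swap (hsymm : ∀ i j, 0 < A i j → 0 < A j i) {x y : V × G}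
    (hxy : Relation.ReflTransGen (fun x y => 0 < skewProduct A t x y) x y) :
    Relation.ReflTransGen (fun x y => 0 < skewProduct A t x y) y x := by
  induction hxy with
  | refl => exact .refl
  | tail _ hstep ih => exact (reflTransGen_swap_of_pos hsymm hstep).trans ih

end Reachability

section FibreSums

variable {V G R : Type*} [Fintype V] [DecidableEq V] [Fintype G] [DecidableEq G] [Semiring R]

theorem sum_pow_apply_right [Mul G] (A : Matrix V V R) (t : V → G) (N : ℕ) (x : V × G) (j : V) :
    ∑ h, (skewProduct A t ^ N) x (j, h) = (A ^ N) x.1 j := by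
  induction N generalizing j with
  | zero => simp [Matrix.one_apply, Prod.ext_iff, ite_and]
  | succ N ih =>
    simp only [pow_succ, Matrix.mul_apply]
    rw [Finset.sum_comm, Fintype.sum_prod_type]
    simp [← Finset.sum_mul, apply_mk, ih]

theorem sum_pow_apply_left [Group G] (A : Matrix V V R) (t : V → G) (N : ℕ) (i : V) (y : V × G) :
    ∑ g, (skewProduct A t ^ N) (i, g) y = (A ^ N) i y.1 := by
  induction N generalizing i with
  | zero => simp [Matrix.one_apply, Prod.ext_iff, ite_and]
  | succ N ih =>
    simp only [pow_succ', Matrix.mul_apply]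
    rw [Finset.sum_comm, Fintype.sum_prod_type]
    simp [← Finset.mul_sum, apply_mk, ih, ← inv_mul_eq_iff_eq_mul]

end FibreSums

section Positivity

variable {V G R : Type*} [Fintype V] [DecidableEq V] [DecidableEq G] [Ring R]
  [LinearOrder R] [IsStrictOrderedRing R] {A : Matrix V V R} {t : V → G}

theorem pow_apply_pos_of_prod {Z : Type*} [Monoid G] [Fintype G] [Monoid Z] [Fintype Z]
    [DecidableEq Z] (hA : ∀ i j, 0 ≤ A i j) {z : Z} {N : ℕ} {i j : V} {g h : G} {r s : Z}
    (hpos : 0 < (skewProduct A (fun i => (t i, z)) ^ N) (i, (g, r)) (j, (h, s))) :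
    s = z ^ N * r ∧ 0 < (skewProduct A t ^ N) (i, g) (j, h) := by
  induction N generalizing j h s with
  | zero =>
    obtain ⟨rfl, rfl, rfl⟩ : i = j ∧ g = h ∧ r = s := by
      by_contra hne
      simp [hne] at hpos
    simp
  | succ N ih =>
    rw [pow_succ, matrix_mul_apply_pos_iff (Matrix.pow_apply_nonneg (nonneg hA) N)
      (nonneg hA)] at hpos
    obtain ⟨⟨l, q, u⟩, hpre, hstep⟩ := hpos
    obtain ⟨hlj, hhs⟩ := apply_pos_iff.mp hstep
    obtain ⟨rfl, rfl⟩ := Prod.ext_iff.mp hhs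
    obtain ⟨rfl, hq⟩ := ih hpre
    refine ⟨by simp only [Prod.snd_mul, pow_succ', mul_assoc],
      matrix_pow_add_apply_pos (nonneg hA) hq ?_⟩
    rw [pow_one]
    exact apply_pos_iff.mpr ⟨hlj, rfl⟩

theorem pow_two_mul_apply_pos [Monoid G] [Fintype G] (hA : ∀ i j, 0 ≤ A i j) {i j : V}
    (hij : 0 < A i j) (hji : 0 < A j i) (n : ℕ) (g : G) :
    0 < (skewProduct A t ^ (2 * n)) (i, g) (i, (t i * t j) ^ n * g) := by
  induction n with
  | zero => simp
  | succ n ih =>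
    refine matrix_pow_add_apply_pos (nonneg hA) ih ?_
    rw [pow_two, matrix_mul_apply_pos_iff (nonneg hA) (nonneg hA)]
    refine ⟨(j, t j * ((t i * t j) ^ n * g)), apply_pos_iff.mpr ⟨hij, rfl⟩,
      apply_pos_iff.mpr ⟨hji, ?_⟩⟩
    simp only [pow_succ', mul_assoc]

variable [Group G]

theorem pow_two_mul_card_diag_pos [Fintype G] (hA : A.IsPrimitive)
    (hsymm : ∀ i j, 0 < A i j → 0 < A j i) (x : V × G) :
    0 < (skewProduct A t ^ (2 * Fintype.card G)) x x := by
  obtain ⟨j, hj⟩ := exists_apply_pos_of_isPrimitive hA x.1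
  simpa using pow_two_mul_apply_pos (t := t) hA.nonneg hj (hsymm _ _ hj) (Fintype.card G) x.2

theorem reflTransGen_same_fibre_coordinate [Finite G] (hA : A.IsPrimitive)
    (hsymm : ∀ i j, 0 < A i j → 0 < A j i) (i j : V) (g : G) :
    Relation.ReflTransGen (fun x y => 0 < skewProduct A t x y) (i, g) (j, g) := by
  have hsq : Relation.ReflTransGen (fun i j => 0 < (A ^ 2) i j) i j := by
    rw [reflTransGen_iff_exists_matrix_pow_pos (Matrix.pow_apply_nonneg hA.nonneg 2)]
    obtain ⟨k, -, hk⟩ := hA.exists_pos_pow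
    refine ⟨k, ?_⟩
    rw [← pow_mul, two_mul]
    exact matrix_pow_add_apply_pos hA.nonneg (hk i i) (hk i j)
  refine hsq.lift' (fun i => (i, g)) fun i j hij => ?_
  rw [pow_two, matrix_mul_apply_pos_iff hA.nonneg hA.nonneg] at hij
  obtain ⟨l, hil, hlj⟩ := hij
  have hstep : 0 < skewProduct A t (i, g) (l, t l * g) := apply_pos_iff.mpr ⟨hil, rfl⟩
  have hstep' : 0 < skewProduct A t (j, g) (l, t l * g) :=
    apply_pos_iff.mpr ⟨hsymm _ _ hlj, rfl⟩
  exact .head hstep (reflTransGen_swap_of_pos hsymm hstep')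

theorem reflTransGen_mul_left [Finite G] (hA : A.IsPrimitive)
    (hsymm : ∀ i j, 0 < A i j → 0 < A j i) (hgen : Subgroup.closure (Set.range t) = ⊤) (p : G)
    (i j : V) (g : G) :
    Relation.ReflTransGen (fun x y => 0 < skewProduct A t x y) (i, g) (j, p * g) := by
  have hp : p ∈ Subgroup.closure (Set.range t) := hgen ▸ Subgroup.mem_top p
  induction hp using Subgroup.closure_induction generalizing i j g with
  | mem _ hx =>
    obtain ⟨x, rfl⟩ := hx
    obtain ⟨y, hxy⟩ := exists_apply_pos_of_isPrimitive hA x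
    have hyx : 0 < skewProduct A t (y, g) (x, t x * g) :=
      apply_pos_iff.mpr ⟨hsymm _ _ hxy, rfl⟩
    exact ((reflTransGen_same_fibre_coordinate hA hsymm i y g).tail hyx).trans
      (reflTransGen_same_fibre_coordinate hA hsymm x j _)
  | one =>
    simpa using reflTransGen_same_fibre_coordinate hA hsymm i j g
  | mul p q _ _ hp hq =>
    simpa only [mul_assoc] using (hq i i g).trans (hp i j (q * g))
  | inv p _ hp =>
    simpa using reflTransGen_swap hsymm (hp j i (p⁻¹ * g))

theorem isIrreducible [Finite G] (hA : A.IsPrimitive)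
    (hsymm : ∀ i j, 0 < A i j → 0 < A j i) (hgen : Subgroup.closure (Set.range t) = ⊤) :
    (skewProduct A t).IsIrreducible := by
  cases nonempty_fintype G
  rw [Matrix.isIrreducible_iff_exists_pow_pos (nonneg hA.nonneg)]
  rintro x ⟨j, h⟩
  obtain ⟨k, hk⟩ := (reflTransGen_iff_exists_matrix_pow_pos (nonneg hA.nonneg)).mp
    (reflTransGen_mul_left hA hsymm hgen (h * x.2⁻¹) x.1 j x.2)
  rw [inv_mul_cancel_right] at hk
  exact ⟨2 * Fintype.card G + k, by positivity,
    matrix_pow_add_apply_pos (nonneg hA.nonneg) (pow_two_mul_card_diag_pos hA hsymm x) hk⟩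

theorem isPrimitive [Nonempty V] [Fintype G] (hA : A.IsPrimitive)
    (hsymm : ∀ i j, 0 < A i j → 0 < A j i) (hgen : Subgroup.closure (Set.range t) = ⊤)
    (hchar : ∀ ρ : G →* ℂˣ, (∃ γ, ρ γ ≠ 1) → ∃ i j, ρ (t i) ≠ ρ (t j)) :
    (skewProduct A t).IsPrimitive := by
  set L := 2 * Fintype.card G
  have hL : 0 < L := by positivity
  have : NeZero L := ⟨hL.ne'⟩
  let z : Multiplicative (ZMod L) := .ofAdd 1
  have hz : Subgroup.zpowers z = ⊤ := by
    rw [Subgroup.eq_top_iff']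
    exact fun s => Subgroup.mem_zpowers_iff.mpr ⟨(s.toAdd.val : ℤ),
      Multiplicative.toAdd.injective (by simp [z])⟩
  have hlift := isIrreducible hA hsymm (closure_range_prodMk_eq_top hz hgen hchar)
  refine isPrimitive_of_isPrimitive_pow (nonneg hA.nonneg) hL
    (isPrimitive_of_isIrreducible_of_diag_pos ?_ (pow_two_mul_card_diag_pos hA hsymm))
  rw [Matrix.isIrreducible_iff_exists_pow_pos (Matrix.pow_apply_nonneg (nonneg hA.nonneg) L)]
  rintro ⟨i, g⟩ ⟨j, h⟩
  obtain ⟨N, hN, hpos⟩ := (Matrix.isIrreducible_iff_exists_pow_pos (nonneg hA.nonneg)).mp hlift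
    (i, (g, 1)) (j, (h, 1))
  obtain ⟨hzN, hpos⟩ := pow_apply_pos_of_prod hA.nonneg hpos
  obtain ⟨b, rfl⟩ : L ∣ N := by
    rw [← ZMod.natCast_eq_zero_iff, ← nsmul_one]
    simpa [z, ← ofAdd_nsmul] using hzN.symm
  exact ⟨b, Nat.pos_of_mul_pos_left hN, by rwa [← pow_mul]⟩

end Positivity

end skewProduct

section Contraction

/-- Doeblin's contraction: subtracting `δ Q` from `P` costs nothing, because fibrewise constant
matrices annihilate the deviation of `M` from its fibre averages. -/
theorem abs_mul_sub_fibre_average_le {V F : Type*} [Fintype V] [Fintype F] [Nonempty F]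
    {P M : Matrix (V × F) (V × F) ℝ} {Q R : Matrix V V ℝ} {δ ε : ℝ}
    (hP : ∀ x j, ∑ h, P x (j, h) = Q x.1 j) (hM : ∀ i y, ∑ g, M (i, g) y = R i y.1)
    (hδ : ∀ x y, δ * Q x.1 y.1 ≤ P x y)
    (hε : ∀ x y, |M x y - R x.1 y.1 / Fintype.card F| ≤ ε * R x.1 y.1) (x y : V × F) :
    |(P * M) x y - (Q * R) x.1 y.1 / Fintype.card F| ≤
      (1 - Fintype.card F * δ) * ε * (Q * R) x.1 y.1 := by
  have hcard : (Fintype.card F : ℝ) ≠ 0 := by positivity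
  have hdev : (P * M) x y - (Q * R) x.1 y.1 / Fintype.card F =
      ∑ u, (P x u - δ * Q x.1 u.1) * (M u y - R u.1 y.1 / Fintype.card F) := by
    rw [Matrix.mul_apply, Matrix.mul_apply, Fintype.sum_prod_type, Fintype.sum_prod_type,
      Finset.sum_div, ← Finset.sum_sub_distrib]
    refine Finset.sum_congr rfl fun l _ => ?_
    simp only [sub_mul, mul_sub, Finset.sum_sub_distrib, ← Finset.sum_mul, ← Finset.mul_sum, hP,
      hM, Finset.sum_const, Finset.card_univ, nsmul_eq_mul]
    field_simp
    ring
  have hmass : ∑ u : V × F, (P x u - δ * Q x.1 u.1) * (ε * R u.1 y.1) =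
      (1 - Fintype.card F * δ) * ε * (Q * R) x.1 y.1 := by
    rw [Matrix.mul_apply, Fintype.sum_prod_type, Finset.mul_sum]
    refine Finset.sum_congr rfl fun l _ => ?_
    simp only [← Finset.sum_mul, Finset.sum_sub_distrib, hP, Finset.sum_const, Finset.card_univ,
      nsmul_eq_mul]
    ring
  rw [hdev, ← hmass]
  refine (Finset.abs_sum_le_sum_abs _ _).trans (Finset.sum_le_sum fun u _ => ?_)
  have hnonneg : 0 ≤ P x u - δ * Q x.1 u.1 := sub_nonneg.mpr (hδ x u)
  rw [abs_mul, abs_of_nonneg hnonneg]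
  exact mul_le_mul_of_nonneg_left (hε u y) hnonneg

variable {V G : Type*} [Fintype V] [DecidableEq V] [Group G] [Fintype G] [DecidableEq G]
  {A : Matrix V V ℝ} {t : V → G}

theorem abs_skewProduct_pow_sub_le (hA : ∀ i j, 0 ≤ A i j) (N : ℕ) (x y : V × G) :
    |(skewProduct A t ^ N) x y - (A ^ N) x.1 y.1 / Fintype.card G| ≤ (A ^ N) x.1 y.1 := by
  have hS : ∀ z, 0 ≤ (skewProduct A t ^ N) x z :=
    Matrix.pow_apply_nonneg (skewProduct.nonneg hA) N x
  have hle : (skewProduct A t ^ N) x y ≤ (A ^ N) x.1 y.1 := by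
    rw [← skewProduct.sum_pow_apply_right A t N x y.1]
    exact Finset.single_le_sum (f := fun h => (skewProduct A t ^ N) x (y.1, h))
      (fun h _ => hS (y.1, h)) (Finset.mem_univ y.2)
  have hapow : 0 ≤ (A ^ N) x.1 y.1 := (hS y).trans hle
  have hdiv : (A ^ N) x.1 y.1 / Fintype.card G ≤ (A ^ N) x.1 y.1 :=
    div_le_self hapow (by exact_mod_cast Fintype.card_pos)
  have hdiv' : 0 ≤ (A ^ N) x.1 y.1 / Fintype.card G := by positivity
  rw [abs_le]
  constructor <;> linarith [hS y]

theorem abs_skewProduct_pow_sub_le_pow_mul (hA : ∀ i j, 0 ≤ A i j) {m : ℕ} {δ : ℝ}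
    (hδ : ∀ x y, δ * (A ^ m) x.1 y.1 ≤ (skewProduct A t ^ m) x y) (q r : ℕ) (x y : V × G) :
    |(skewProduct A t ^ (m * q + r)) x y - (A ^ (m * q + r)) x.1 y.1 / Fintype.card G| ≤
      (1 - Fintype.card G * δ) ^ q * (A ^ (m * q + r)) x.1 y.1 := by
  induction q generalizing x y with
  | zero => simpa using abs_skewProduct_pow_sub_le hA r x y
  | succ q ih =>
    rw [show m * (q + 1) + r = m + (m * q + r) by ring, pow_add _ m, pow_add A m,
      pow_succ']
    exact abs_mul_sub_fibre_average_le (skewProduct.sum_pow_apply_right A t m)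
      (skewProduct.sum_pow_apply_left A t _) hδ ih x y

theorem exists_pos_mul_lt_one_and_forall_mul_le {ι : Type*} [Finite ι] (a : ι → ℝ) {b : ι → ℝ}
    (hb : ∀ i, 0 < b i) (e : ℝ) : ∃ δ > 0, δ * e < 1 ∧ ∀ i, δ * a i ≤ b i := by
  have hsmall : ∀ u v : ℝ, 0 < v → ∀ᶠ δ in nhdsWithin (0 : ℝ) (Set.Ioi 0), δ * u < v := by
    intro u v hv
    have hcont : Filter.Tendsto (fun δ : ℝ => δ * u) (nhds 0) (nhds (0 * u)) :=
      (continuous_mul_const u).tendsto 0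
    exact (hcont.eventually_lt_const (by simpa using hv)).filter_mono nhdsWithin_le_nhds
  obtain ⟨δ, hδ, he, hab⟩ := (eventually_mem_nhdsWithin.and ((hsmall e 1 one_pos).and
    (Filter.eventually_all.mpr fun i => hsmall (a i) (b i) (hb i)))).exists
  exact ⟨δ, hδ, he, fun i => (hab i).le⟩

theorem exists_pow_div_le_mul_pow {θ : ℝ} (hθ₀ : 0 < θ) (hθ₁ : θ < 1) {m : ℕ} (hm : 0 < m) :
    ∃ C > 0, ∃ c : ℝ, 0 < c ∧ c < 1 ∧ ∀ N : ℕ, θ ^ (N / m) ≤ C * c ^ N := by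
  set c : ℝ := θ ^ (m : ℝ)⁻¹
  have hc₀ : 0 < c := Real.rpow_pos_of_pos hθ₀ _
  have hc₁ : c < 1 := Real.rpow_lt_one hθ₀.le hθ₁ (by positivity)
  have hcm : c ^ m = θ := Real.rpow_inv_natCast_pow hθ₀.le hm.ne'
  refine ⟨θ⁻¹, inv_pos.mpr hθ₀, c, hc₀, hc₁, fun N => ?_⟩
  rw [← div_eq_inv_mul, le_div_iff₀ hθ₀, ← hcm, ← pow_mul, ← pow_add]
  exact pow_le_pow_of_le_one hc₀.le hc₁.le (Nat.lt_mul_div_succ N hm).le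

theorem exists_abs_skewProduct_pow_sub_le (hA : ∀ i j, 0 ≤ A i j)
    (hS : (skewProduct A t).IsPrimitive) :
    ∃ C > 0, ∃ c : ℝ, 0 < c ∧ c < 1 ∧ ∀ N x y,
      |(skewProduct A t ^ N) x y - (A ^ N) x.1 y.1 / Fintype.card G| ≤
        C * c ^ N * (A ^ N) x.1 y.1 := by
  obtain ⟨m, hm, hpos⟩ := hS.exists_pos_pow
  obtain ⟨δ, hδ, hδ_card, hδ_le⟩ := exists_pos_mul_lt_one_and_forall_mul_le
    (fun p : (V × G) × V × G => (A ^ m) p.1.1 p.2.1) (fun p => hpos p.1 p.2) (Fintype.card G)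
  have hcard : 0 < Fintype.card G * δ := by positivity
  obtain ⟨C, hC, c, hc₀, hc₁, hle⟩ := exists_pow_div_le_mul_pow
    (θ := 1 - Fintype.card G * δ) (by linarith) (by linarith) hm
  refine ⟨C, hC, c, hc₀, hc₁, fun N x y => ?_⟩
  have hdev := abs_skewProduct_pow_sub_le_pow_mul hA (fun x y => hδ_le (x, y)) (N / m) (N % m) x y
  rw [Nat.div_add_mod] at hdev
  exact hdev.trans (mul_le_mul_of_nonneg_right (hle N) (Matrix.pow_apply_nonneg hA N _ _))

end Contraction

section Walks

variable {V G R : Type*}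

/-- The weight of a walk of length `N`: the product of the matrix entries of its steps. -/
def walkWeight [CommMonoid R] (A : Matrix V V R) {N : ℕ} (w : Fin (N + 1) → V) : R :=
  ∏ j : Fin N, A (w j.castSucc) (w j.succ)

/-- The group element of a walk: the product of its labels, the latest one standing leftmost. -/
def walkProduct [Monoid G] (t : V → G) {N : ℕ} (w : Fin (N + 1) → V) : G :=
  (List.ofFn fun j => t (w j)).reverse.prod

theorem walkWeight_snoc [CommMonoid R] (A : Matrix V V R) {N : ℕ} (w : Fin (N + 1) → V) (j : V) :
    walkWeight A (Fin.snoc (α := fun _ => V) w j) = walkWeight A w * A (w (Fin.last N)) j := by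
  simp only [walkWeight, Fin.prod_univ_castSucc (n := N), Fin.succ_castSucc, Fin.snoc_castSucc,
    Fin.succ_last, Fin.snoc_last]

theorem walkProduct_snoc [Monoid G] (t : V → G) {N : ℕ} (w : Fin (N + 1) → V) (j : V) :
    walkProduct t (Fin.snoc (α := fun _ => V) w j) = t j * walkProduct t w := by
  simp only [walkProduct, List.ofFn_succ' (n := N + 1), Fin.snoc_castSucc, Fin.snoc_last,
    List.concat_eq_append, List.reverse_append, List.reverse_singleton, List.prod_append,
    List.prod_singleton]

variable [Fintype V] [DecidableEq V] [Monoid G] [Fintype G] [DecidableEq G] [CommSemiring R]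
  (A : Matrix V V R) (t : V → G)

theorem sum_walkWeight_mul (N : ℕ) (φ : V × G → R) :
    ∑ w : Fin (N + 1) → V, walkWeight A w * φ (w (Fin.last N), walkProduct t w) =
      ∑ i, (skewProduct A t ^ N).mulVec φ (i, t i) := by
  induction N generalizing φ with
  | zero =>
    rw [← (Equiv.funUnique (Fin 1) V).symm.sum_comp]
    simp [walkWeight, walkProduct]
  | succ N ih =>
    have hstep : ∀ l g, (skewProduct A t).mulVec φ (l, g) = ∑ j, A l j * φ (j, t j * g) := by
      intro l g
      simp [Matrix.mulVec, dotProduct, Fintype.sum_prod_type, skewProduct.apply_mk]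
    have hsnoc : ∀ p : V × (Fin (N + 1) → V),
        Fin.snocEquiv (fun _ => V) p = Fin.snoc (α := fun _ => V) p.2 p.1 := fun _ => rfl
    rw [pow_succ, ← Matrix.mulVec_mulVec, ← ih, ← (Fin.snocEquiv fun _ => V).sum_comp,
      Fintype.sum_prod_type_right]
    simp only [hsnoc, walkWeight_snoc, walkProduct_snoc, Fin.snoc_last, hstep,
      Finset.mul_sum, mul_assoc]

theorem sum_walkWeight_walkProduct_eq (N : ℕ) (γ : G) :
    ∑ w : Fin (N + 1) → V with walkProduct t w = γ, walkWeight A w =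
      ∑ i, ∑ j, (skewProduct A t ^ N) (i, t i) (j, γ) := by
  simpa [Finset.sum_filter, Matrix.mulVec, dotProduct, Fintype.sum_prod_type] using
    sum_walkWeight_mul A t N fun y => if y.2 = γ then 1 else 0

theorem sum_walkWeight (N : ℕ) :
    ∑ w : Fin (N + 1) → V, walkWeight A w = ∑ i, ∑ j, (A ^ N) i j := by
  simpa only [Matrix.mulVec, dotProduct, Fintype.sum_prod_type, Pi.one_apply, mul_one,
    skewProduct.sum_pow_apply_right] using sum_walkWeight_mul A (fun _ => (1 : Unit)) N 1

end Walks

theorem stmt0_general {G V : Type*} [Group G] [Fintype G] [DecidableEq G] [Fintype V]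
    [DecidableEq V] [Nonempty V] {A : Matrix V V ℝ} {t : V → G} (hA : A.IsPrimitive)
    (hsymm : ∀ i j, 0 < A i j → 0 < A j i) (hgen : Subgroup.closure (Set.range t) = ⊤)
    (hchar : ∀ ρ : G →* ℂˣ, (∃ γ, ρ γ ≠ 1) → ∃ i j, ρ (t i) ≠ ρ (t j)) :
    ∃ C : ℝ, 0 < C ∧ ∃ c : ℝ, 0 < c ∧ c < 1 ∧ ∀ (N : ℕ) (γ : G),
      |(∑ w : Fin (N + 1) → V with walkProduct t w = γ, walkWeight A w) /
          (∑ w : Fin (N + 1) → V, walkWeight A w) - 1 / (Fintype.card G : ℝ)| ≤ C * c ^ N := by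
  obtain ⟨C, hC, c, hc₀, hc₁, hdev⟩ := exists_abs_skewProduct_pow_sub_le hA.nonneg
    (skewProduct.isPrimitive hA hsymm hgen hchar)
  refine ⟨C, hC, c, hc₀, hc₁, fun N γ => ?_⟩
  rw [sum_walkWeight_walkProduct_eq, sum_walkWeight]
  set D := ∑ i, ∑ j, (A ^ N) i j with hD
  have hD₀ : 0 < D := sum_matrix_pow_pos_of_isPrimitive hA N
  rw [div_sub' hD₀.ne', abs_div, abs_of_pos hD₀, div_le_iff₀ hD₀, mul_one_div, hD, Finset.sum_div,
    ← Finset.sum_sub_distrib, Finset.mul_sum]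
  refine (Finset.abs_sum_le_sum_abs _ _).trans (Finset.sum_le_sum fun i _ => ?_)
  rw [Finset.sum_div, ← Finset.sum_sub_distrib, Finset.mul_sum]
  exact (Finset.abs_sum_le_sum_abs _ _).trans
    (Finset.sum_le_sum fun j _ => hdev N (i, t i) (j, γ))

/-- equidistribution of walk products over a finite group,
with exponential speed of convergence. -/
theorem stmt0 {Γ : Type*} [Group Γ] [Fintype Γ] [DecidableEq Γ]
    (n : ℕ) (hn : 1 ≤ n) (A : Fin n → Fin n → ℕ) (t : Fin n → Γ)
    (hsymm : ∀ i j, A i j = A j i)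
    (hprim : ∃ k, 1 ≤ k ∧ ∀ i j, 0 < ((Matrix.of A) ^ k) i j)
    (hgen : Subgroup.closure (Set.range t) = ⊤)
    (hrho : ∀ ρ : Γ →* ℂˣ, (∃ γ, ρ γ ≠ 1) → ∃ i j, ρ (t i) ≠ ρ (t j)) :
    ∃ C : ℝ, 0 < C ∧ ∃ c : ℝ, 0 < c ∧ c < 1 ∧
      ∀ N, 1 ≤ N → ∀ γ : Γ,
        |(∑ w ∈ Finset.univ.filter
              (fun w : Fin (N + 1) → Fin n =>
                (List.ofFn fun j => t (w j)).reverse.prod = γ),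
            ((∏ j : Fin N, A (w j.castSucc) (w j.succ) : ℕ) : ℝ)) /
          (∑ w : Fin (N + 1) → Fin n,
            ((∏ j : Fin N, A (w j.castSucc) (w j.succ) : ℕ) : ℝ))
          - 1 / (Fintype.card Γ : ℝ)| ≤ C * c ^ N := by
  have : Nonempty (Fin n) := ⟨⟨0, hn⟩⟩
  obtain ⟨k, hk, hpos⟩ := hprim
  obtain ⟨C, hC, c, hc₀, hc₁, h⟩ := stmt0_general (isPrimitive_map_natCast hk hpos)
    (fun i j hij => by simpa [hsymm j i] using hij) hgen hrho
  exact ⟨C, hC, c, hc₀, hc₁, fun N _ γ => by simpa [walkWeight, walkProduct] using h N γ⟩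
end

section
/- Fix n ≥ 2. There exists a constant C > 0, depending only on n, such that for every prime p, the number of matrices M in SL(n, ZMod p) whose characteristic polynomial admits a monic factor q ∈ (ZMod p)[X] with 0 < natDegree q < n and q.coeff 0 = 1 is at most C · p^{n²−2}. Since |SL(n, ZMod p)| is asymptotic to p^{n²−1}, the probability that the characteristic polynomial of a uniformly random matrix in SL(n, ZMod p) has a factor with constant coefficient 1 is O(1/p). -/
/-!
Fix a finite field with `p` elements. A characteristic polynomial with a proper monic factor of
constant coefficient `a` is a product `q * r` in which both constant coefficients are prescribed,
since their product is `± det M = ± 1`; for each degree of `q` there are at most `p ^ (n - 2)` such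
products. It remains to see that `O(p ^ (n ^ 2 - n))` matrices share a given characteristic
polynomial `f`.

Write such a matrix in blocks as `[A b; c d]`, with `A` of size `m = n - 1`. By the Schur
complement, its reversed characteristic polynomial is
`det (1 - X A) * (1 - d X - X ^ 2 * ∑ (c A ^ l b) X ^ l)`. For given `A` and `c`, then, `f`
determines `d` and all Markov parameters `c A ^ l b`, and subtracting from `b` one fixed solution
leaves a triple `(A, b, c)` whose Markov parameters all vanish. If the Krylov vectors
`b, A b, …, A ^ (k - 1) b` form a basis of the cyclic subspace of `b`, there are at most
`p ^ (m k + k)` possibilities for `b, A b, …, A ^ k b`, which determine `A` and `c` on that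
subspace, and then `p ^ ((m - k) (m + 1))` possibilities for `(A, c)`. Hence there are at most
`p ^ (m ^ 2 + m)` such triples for each of the `m + 1` values of `k`.
-/

section Counting

variable {α β : Type*}

theorem ncard_le_mul_ncard_of_mapsTo {s : Set α} {t : Set β} (hs : s.Finite) (ht : t.Finite)
    {f : α → β} (hf : Set.MapsTo f s t) {n : ℕ} (hn : ∀ b ∈ t, {a ∈ s | f a = b}.ncard ≤ n) :
    s.ncard ≤ n * t.ncard := by
  classical
  rw [Set.ncard_eq_toFinset_card s hs, Set.ncard_eq_toFinset_card t ht]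
  refine Finset.card_le_mul_card_image_of_maps_to (f := f) ?_ n fun b hb => ?_
  · simpa [Set.MapsTo] using hf
  · rw [← Set.ncard_coe_finset]
    simpa using hn b (ht.mem_toFinset.mp hb)

theorem ncard_biUnion_le_card_mul {I : Finset β} {S : β → Set α} {n : ℕ}
    (hn : ∀ i ∈ I, (S i).ncard ≤ n) : (⋃ i ∈ I, S i).ncard ≤ I.card * n :=
  (I.set_ncard_biUnion_le S).trans (Finset.sum_le_card_nsmul I _ n hn)

end Counting

section NullSystems

open Module

variable {K V W : Type*} [Field K] [AddCommGroup V] [Module K V] [AddCommGroup W] [Module K W]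

theorem ncard_linearMap_apply_eq_le [Finite K] [FiniteDimensional K V] [FiniteDimensional K W]
    {ι : Type*} [Fintype ι] {s : ι → V} (hs : LinearIndependent K s) (w : ι → W) :
    {f : V →ₗ[K] W | ∀ i, f (s i) = w i}.ncard ≤
      Nat.card K ^ ((finrank K V - Fintype.card ι) * finrank K W) := by
  obtain ⟨U, hU⟩ := Submodule.exists_isCompl (Submodule.span K (Set.range s))
  have finrank_U : finrank K U = finrank K V - Fintype.card ι := by
    have := Submodule.finrank_add_eq_of_isCompl hU
    rw [finrank_span_eq_card hs] at this
    omega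
  have : Finite (U →ₗ[K] W) := Module.finite_of_finite K
  rw [← finrank_U, ← finrank_linearMap (S := K), ← Module.natCard_eq_pow_finrank, ← Set.ncard_univ]
  refine Set.ncard_le_ncard_of_injOn (fun f => f.domRestrict U) (fun _ _ => Set.mem_univ _) ?_
  intro f hf g hg hfg
  refine LinearMap.ext_on_codisjoint hU.codisjoint (LinearMap.eqOn_span ?_) fun x hx => ?_
  · rintro _ ⟨i, rfl⟩
    exact (hf i).trans (hg i).symm
  · exact LinearMap.congr_fun hfg ⟨x, hx⟩

variable (K V) in
/-- The single-input single-output linear systems `(A, b, c)` with state space `V` whose Markov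
parameters `c (A ^ l b)` all vanish, that is, whose transfer function is zero. -/
def nullSystems : Set (End K V × V × Dual K V) :=
  {x | ∀ l : ℕ, x.2.2 ((x.1 ^ l) x.2.1) = 0}

/-- `A ^ k b` is the first term of the Krylov sequence `b, A b, A ^ 2 b, …` that depends linearly on
its predecessors; equivalently, the cyclic subspace generated by `b` has dimension `k`. -/
def HasKrylovDegree (A : End K V) (b : V) (k : ℕ) : Prop :=
  LinearIndependent K (fun i : Fin k => (A ^ (i : ℕ)) b) ∧
    (A ^ k) b ∈ Submodule.span K (Set.range fun i : Fin k => (A ^ (i : ℕ)) b)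

theorem exists_hasKrylovDegree [FiniteDimensional K V] (A : End K V) (b : V) :
    ∃ k ≤ finrank K V, HasKrylovDegree A b k := by
  classical
  have dependent : ∃ k, ¬ LinearIndependent K (fun i : Fin (k + 1) => (A ^ (i : ℕ)) b) :=
    ⟨finrank K V, fun h => by simpa using h.fintype_card_le_finrank⟩
  have independent :
      LinearIndependent K (fun i : Fin (Nat.find dependent) => (A ^ (i : ℕ)) b) := by
    rcases hk : Nat.find dependent with _ | k
    · exact linearIndependent_empty_type
    · exact not_not.mp (Nat.find_min dependent (by omega))
  refine ⟨Nat.find dependent, by simpa using independent.fintype_card_le_finrank, independent, ?_⟩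
  by_contra h
  exact Nat.find_spec dependent (linearIndependent_finSucc'.mpr ⟨independent, h⟩)

variable [Finite K] [FiniteDimensional K V]

theorem ncard_last_mem_span_init_le (k : ℕ) :
    {v : Fin (k + 1) → V | v (Fin.last k) ∈ Submodule.span K (Set.range (Fin.init v))}.ncard ≤
      Nat.card K ^ (k * finrank K V + k) := by
  have : Finite V := Module.finite_of_finite K
  let extend (x : (Fin k → V) × (Fin k → K)) : Fin (k + 1) → V :=
    Fin.snoc (α := fun _ => V) x.1 (∑ i, x.2 i • x.1 i)
  calc _ ≤ (extend '' Set.univ).ncard := by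
        refine Set.ncard_le_ncard fun v hv => ?_
        obtain ⟨a, ha⟩ := (Submodule.mem_span_range_iff_exists_fun K).mp hv
        exact ⟨(Fin.init v, a), trivial, by simp only [extend, ha, Fin.snoc_init_self]⟩
    _ ≤ (Set.univ : Set ((Fin k → V) × (Fin k → K))).ncard := Set.ncard_image_le
    _ = Nat.card K ^ (k * finrank K V + k) := by
        rw [Set.ncard_univ, Nat.card_prod, Nat.card_fun, Nat.card_fun, Nat.card_fin,
          Module.natCard_eq_pow_finrank (K := K) (V := V), ← pow_mul, ← pow_add, mul_comm]

theorem ncard_nullSystems_krylov_eq_le {k : ℕ} {v : Fin (k + 1) → V}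
    (hv : LinearIndependent K (Fin.init v)) :
    {x ∈ nullSystems K V | (fun i : Fin (k + 1) => (x.1 ^ (i : ℕ)) x.2.1) = v}.ncard ≤
      Nat.card K ^ ((finrank K V - k) * (finrank K V + 1)) := by
  have : Finite (V →ₗ[K] V × K) := Module.finite_of_finite K
  -- `b` is `v 0`, and `(A, c)` is a linear map `V → V × K` sending each `v i` to `(v (i + 1), 0)`.
  have count := ncard_linearMap_apply_eq_le hv fun i => (v i.succ, (0 : K))
  rw [Fintype.card_fin, finrank_prod, finrank_self] at count
  refine le_trans (Set.ncard_le_ncard_of_injOn (fun x => x.1.prod x.2.2) ?_ ?_) count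
  · rintro ⟨A, b, c⟩ ⟨null, rfl⟩ i
    exact Prod.ext (by simp [Fin.init, pow_succ']) (null i)
  · rintro ⟨A, b, c⟩ ⟨-, rfl⟩ ⟨A', b', c'⟩ ⟨-, h⟩ hprod
    have hb : b' = b := by simpa using congrFun h 0
    have hA : A = A' := congrArg ((LinearMap.fst K V K).comp ·) hprod
    have hc : c = c' := congrArg ((LinearMap.snd K V K).comp ·) hprod
    rw [hA, hb, hc]

theorem ncard_nullSystems_hasKrylovDegree_le {k : ℕ} (hk : k ≤ finrank K V) :
    {x ∈ nullSystems K V | HasKrylovDegree x.1 x.2.1 k}.ncard ≤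
      Nat.card K ^ (finrank K V ^ 2 + finrank K V) := by
  have : Finite V := Module.finite_of_finite K
  have : Finite (End K V) := Module.finite_of_finite K
  have : Finite (Dual K V) := Module.finite_of_finite K
  let krylov (x : End K V × V × Dual K V) (i : Fin (k + 1)) : V := (x.1 ^ (i : ℕ)) x.2.1
  calc _ ≤ Nat.card K ^ ((finrank K V - k) * (finrank K V + 1)) *
        {v : Fin (k + 1) → V |
          v (Fin.last k) ∈ Submodule.span K (Set.range (Fin.init v))}.ncard := by
        refine ncard_le_mul_ncard_of_mapsTo (Set.toFinite _) (Set.toFinite _) (f := krylov)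
          (fun x hx => hx.2.2) fun v _ => ?_
        by_cases hv : LinearIndependent K (Fin.init v)
        · refine (Set.ncard_le_ncard ?_).trans (ncard_nullSystems_krylov_eq_le hv)
          exact fun x hx => ⟨hx.1.1, hx.2⟩
        · convert Nat.zero_le _
          refine (Set.ncard_eq_zero).mpr (Set.eq_empty_of_forall_notMem ?_)
          rintro x ⟨⟨-, h⟩, rfl⟩
          exact hv h.1
    _ ≤ Nat.card K ^ ((finrank K V - k) * (finrank K V + 1)) *
        Nat.card K ^ (k * finrank K V + k) := by gcongr; exact ncard_last_mem_span_init_le k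
    _ = Nat.card K ^ (finrank K V ^ 2 + finrank K V) := by
        obtain ⟨l, hl⟩ := Nat.exists_eq_add_of_le hk
        rw [← pow_add, hl, Nat.add_sub_cancel_left]
        ring_nf

theorem ncard_nullSystems_le :
    (nullSystems K V).ncard ≤
      (finrank K V + 1) * Nat.card K ^ (finrank K V ^ 2 + finrank K V) := by
  have : Finite V := Module.finite_of_finite K
  have : Finite (End K V) := Module.finite_of_finite K
  have : Finite (Dual K V) := Module.finite_of_finite K
  have cover : nullSystems K V ⊆ ⋃ k ∈ Finset.range (finrank K V + 1),
      {x ∈ nullSystems K V | HasKrylovDegree x.1 x.2.1 k} := by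
    intro x hx
    obtain ⟨k, hk, degree⟩ := exists_hasKrylovDegree x.1 x.2.1
    simp only [Set.mem_iUnion]
    exact ⟨k, Finset.mem_range_succ_iff.mpr hk, hx, degree⟩
  refine (Set.ncard_le_ncard cover).trans ?_
  simpa only [Finset.card_range] using ncard_biUnion_le_card_mul fun k hk =>
    ncard_nullSystems_hasKrylovDegree_le (Finset.mem_range_succ_iff.mp hk)

end NullSystems

section BorderedMatrices

open Matrix PowerSeries

variable {R ι : Type*}

/-- The block matrix `[A b; c d]`, obtained by bordering the square matrix `A` with a last column
`b`, a last row `c` and a corner entry `d`. -/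
def bordered (A : Matrix ι ι R) (b c : ι → R) (d : R) : Matrix (ι ⊕ Unit) (ι ⊕ Unit) R :=
  fromBlocks A (replicateCol Unit b) (replicateRow Unit c) (of fun _ _ => d)

theorem exists_eq_bordered (M : Matrix (ι ⊕ Unit) (ι ⊕ Unit) R) :
    ∃ A b c d, M = bordered A b c d :=
  ⟨M.toBlocks₁₁, fun i => M (.inl i) (.inr ()), fun j => M (.inr ()) (.inl j),
    M (.inr ()) (.inr ()), (fromBlocks_toBlocks M).symm⟩

variable [CommRing R] [Fintype ι] [DecidableEq ι]

theorem coe_charpolyRev (A : Matrix ι ι R) :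
    (A.charpolyRev : R⟦X⟧) = (1 - (X : R⟦X⟧) • A.map C).det := by
  rw [charpolyRev, ← Polynomial.coeToPowerSeries.ringHom_apply, RingHom.map_det]
  congr 1
  ext i j : 1
  simp [Matrix.one_apply, apply_ite, X_mul]

theorem isUnit_coe_charpolyRev (A : Matrix ι ι R) : IsUnit (A.charpolyRev : R⟦X⟧) := by
  rw [isUnit_iff_constantCoeff, Polynomial.constantCoeff_coe,
    Polynomial.coeff_zero_eq_eval_zero, eval_charpolyRev]
  exact isUnit_one

/-- The geometric series `∑ X ^ l • A ^ l`, inverse to `1 - X • A`, as a matrix of power series. -/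
def geometricSeries (A : Matrix ι ι R) : Matrix ι ι R⟦X⟧ :=
  of fun i j => mk fun l => (A ^ l) i j

theorem one_sub_X_smul_mul_geometricSeries (A : Matrix ι ι R) :
    (1 - (X : R⟦X⟧) • A.map C) * geometricSeries A = 1 := by
  rw [sub_mul, one_mul, smul_mul_assoc, sub_eq_iff_eq_add]
  ext i j l
  rcases l with _ | l
  · by_cases hij : i = j <;> simp [geometricSeries, hij]
  · simp [geometricSeries, Matrix.one_apply, apply_ite, coeff_succ_X_mul, Matrix.mul_apply,
      pow_succ', coeff_one]

theorem row_mul_geometricSeries_mul_column (A : Matrix ι ι R) (b c : ι → R) :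
    ((replicateRow Unit c).map C * geometricSeries A * (replicateCol Unit b).map C) () () =
      mk fun l => c ⬝ᵥ (A ^ l) *ᵥ b := by
  ext l
  rw [Matrix.mul_assoc]
  simp [geometricSeries, Matrix.mul_apply, dotProduct, mulVec]

theorem coe_charpolyRev_bordered (A : Matrix ι ι R) (b c : ι → R) (d : R) :
    ((bordered A b c d).charpolyRev : R⟦X⟧) =
      (A.charpolyRev : R⟦X⟧) * (1 - X * C d - X ^ 2 * mk fun l => c ⬝ᵥ (A ^ l) *ᵥ b) := by
  let P := 1 - (X : R⟦X⟧) • A.map C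
  let _ : Invertible P :=
    invertibleOfRightInverse P (geometricSeries A) (one_sub_X_smul_mul_geometricSeries A)
  have inv_P : ⅟P = geometricSeries A :=
    invOf_eq_right_inv (one_sub_X_smul_mul_geometricSeries A)
  have blocks : 1 - (X : R⟦X⟧) • (bordered A b c d).map C =
      fromBlocks P (-((X : R⟦X⟧) • (replicateCol Unit b).map C))
        (-((X : R⟦X⟧) • (replicateRow Unit c).map C)) (of fun _ _ => 1 - X * C d) := by
    ext (i | i) (j | j) : 2 <;> simp [bordered, P, Matrix.one_apply]
  rw [coe_charpolyRev, blocks, det_fromBlocks₁₁, inv_P, ← row_mul_geometricSeries_mul_column,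
    coe_charpolyRev]
  congr 1
  simp only [Matrix.neg_mul, Matrix.mul_neg, Matrix.smul_mul, Matrix.mul_smul, smul_neg, neg_neg,
    smul_smul, det_unique, PUnit.default_eq_unit, Matrix.sub_apply, Matrix.smul_apply, of_apply,
    smul_eq_mul, sq]

theorem eq_and_markov_eq_of_charpoly_bordered_eq {A : Matrix ι ι R} {b b' c : ι → R} {d d' : R}
    (h : (bordered A b c d).charpoly = (bordered A b' c d').charpoly) :
    d = d' ∧ ∀ l : ℕ, c ⬝ᵥ (A ^ l) *ᵥ b = c ⬝ᵥ (A ^ l) *ᵥ b' := by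
  have series : 1 - X * C d - X ^ 2 * (mk fun l => c ⬝ᵥ (A ^ l) *ᵥ b) =
      1 - X * C d' - X ^ 2 * (mk fun l => c ⬝ᵥ (A ^ l) *ᵥ b') := by
    apply (isUnit_coe_charpolyRev A).mul_left_cancel
    rw [← coe_charpolyRev_bordered, ← coe_charpolyRev_bordered, ← reverse_charpoly,
      ← reverse_charpoly, h]
  have hd : d = d' := by
    simpa [coeff_X_pow_mul', coeff_one, coeff_succ_X_mul] using congrArg (coeff (0 + 1)) series
  subst hd
  refine ⟨rfl, fun l => ?_⟩
  simpa only [sub_right_inj, coeff_X_pow_mul, coeff_mk] using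
    congrArg (coeff (l + 2)) (sub_right_injective series)

theorem exists_column_of_charpoly_bordered_eq (f : Polynomial R) (A : Matrix ι ι R) (c : ι → R) :
    ∃ b₀ : ι → R, ∀ b d, (bordered A b c d).charpoly = f →
      ∀ l : ℕ, c ⬝ᵥ (A ^ l) *ᵥ (b - b₀) = 0 := by
  by_cases h : ∃ b₀ d₀, (bordered A b₀ c d₀).charpoly = f
  · obtain ⟨b₀, d₀, h₀⟩ := h
    refine ⟨b₀, fun b d hb l => ?_⟩
    have markov_eq := (eq_and_markov_eq_of_charpoly_bordered_eq (hb.trans h₀.symm)).2 l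
    rw [mulVec_sub, dotProduct_sub, markov_eq, sub_self]
  · push Not at h
    exact ⟨0, fun b d hb => absurd hb (h b d)⟩

end BorderedMatrices

section CharpolyFibers

open Matrix

variable {K ι : Type*} [Field K] [Finite K] [Fintype ι] [DecidableEq ι]

theorem ncard_charpoly_eq_le_sum_unit (f : Polynomial K) :
    {M : Matrix (ι ⊕ Unit) (ι ⊕ Unit) K | M.charpoly = f}.ncard ≤
      (nullSystems K (ι → K)).ncard := by
  have : Finite (Module.End K (ι → K)) := Module.finite_of_finite K
  have : Finite (Module.Dual K (ι → K)) := Module.finite_of_finite K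
  choose b₀ hb₀ using exists_column_of_charpoly_bordered_eq (R := K) (ι := ι) f
  let toSystem (M : Matrix (ι ⊕ Unit) (ι ⊕ Unit) K) :
      Module.End K (ι → K) × (ι → K) × Module.Dual K (ι → K) :=
    (toLin' M.toBlocks₁₁,
      (fun i => M (.inl i) (.inr ())) - b₀ M.toBlocks₁₁ fun j => M (.inr ()) (.inl j),
      dotProductEquiv K ι fun j => M (.inr ()) (.inl j))
  have toSystem_bordered (A b c d) : toSystem (bordered A b c d) =
      (toLin' A, b - b₀ A c, dotProductEquiv K ι c) := rfl
  refine Set.ncard_le_ncard_of_injOn toSystem ?_ ?_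
  · intro M hM l
    obtain ⟨A, b, c, d, rfl⟩ := exists_eq_bordered M
    simpa [toSystem_bordered, ← toLin'_pow] using hb₀ A c b d hM l
  · intro M hM M' hM' h
    obtain ⟨A, b, c, d, rfl⟩ := exists_eq_bordered M
    obtain ⟨A', b', c', d', rfl⟩ := exists_eq_bordered M'
    simp only [toSystem_bordered, Prod.mk.injEq, EmbeddingLike.apply_eq_iff_eq] at h
    obtain ⟨rfl, hb, rfl⟩ := h
    obtain rfl := sub_left_injective hb
    rw [(eq_and_markov_eq_of_charpoly_bordered_eq (hM.trans hM'.symm)).1]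

theorem ncard_charpoly_eq_le [Nonempty ι] (f : Polynomial K) :
    {M : Matrix ι ι K | M.charpoly = f}.ncard ≤
      Fintype.card ι * Nat.card K ^ (Fintype.card ι ^ 2 - Fintype.card ι) := by
  obtain ⟨m, hm⟩ : ∃ m, Fintype.card ι = m + 1 := Nat.exists_eq_add_one.mpr Fintype.card_pos
  let e : ι ≃ Fin m ⊕ Unit := Fintype.equivOfCardEq (by simp [hm])
  calc _ ≤ {M : Matrix (Fin m ⊕ Unit) (Fin m ⊕ Unit) K | M.charpoly = f}.ncard :=
        Set.ncard_le_ncard_of_injOn (reindex e e)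
          (fun M hM => (charpoly_reindex e M).trans hM) (reindex e e).injective.injOn
    _ ≤ (nullSystems K (Fin m → K)).ncard := ncard_charpoly_eq_le_sum_unit f
    _ ≤ (m + 1) * Nat.card K ^ (m ^ 2 + m) := by
        simpa using ncard_nullSystems_le (K := K) (V := Fin m → K)
    _ = _ := by
        rw [hm, show (m + 1) ^ 2 = m ^ 2 + m + (m + 1) by ring, Nat.add_sub_cancel]

end CharpolyFibers

section PrescribedFactors

open Polynomial

variable {R : Type*} [Semiring R]

variable (R) in
/-- The monic polynomials over `R` of degree `k` with constant coefficient `a`. -/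
def monicsWithConst (k : ℕ) (a : R) : Set R[X] :=
  {q | q.Monic ∧ q.natDegree = k ∧ q.coeff 0 = a}

theorem injOn_middle_coeffs (k : ℕ) (a : R) :
    Set.InjOn (fun (q : R[X]) (i : Fin (k - 1)) => q.coeff (i + 1)) (monicsWithConst R k a) := by
  rintro q ⟨hq, hqk, hqa⟩ r ⟨hr, hrk, hra⟩ h
  ext i
  rcases Nat.eq_zero_or_pos i with rfl | hi
  · rw [hqa, hra]
  rcases lt_trichotomy i k with hik | rfl | hik
  · simpa [Nat.sub_add_cancel hi] using congrFun h ⟨i - 1, by omega⟩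
  · rw [← hqk, hq.coeff_natDegree, hqk, ← hrk, hr.coeff_natDegree]
  · rw [coeff_eq_zero_of_natDegree_lt (hqk.trans_lt hik),
      coeff_eq_zero_of_natDegree_lt (hrk.trans_lt hik)]

variable [Finite R]

theorem finite_monicsWithConst (k : ℕ) (a : R) : (monicsWithConst R k a).Finite :=
  .of_finite_image (Set.toFinite _) (injOn_middle_coeffs k a)

theorem ncard_monicsWithConst_le (k : ℕ) (a : R) :
    (monicsWithConst R k a).ncard ≤ Nat.card R ^ (k - 1) := by
  simpa [Set.ncard_univ, Nat.card_fun] using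
    Set.ncard_le_ncard_of_injOn _ (fun _ _ => Set.mem_univ _) (injOn_middle_coeffs k a)

/-- The products `q * r` of monic polynomials of degrees `k`, `n - k` with `0 < k < n` and constant
coefficients `a`, `b`. -/
def splitProducts (n : ℕ) (a b : R) : Set R[X] :=
  ⋃ k ∈ Finset.Ioo 0 n,
    (fun x : R[X] × R[X] => x.1 * x.2) '' monicsWithConst R k a ×ˢ monicsWithConst R (n - k) b

theorem finite_splitProducts (n : ℕ) (a b : R) : (splitProducts n a b).Finite :=
  (Finset.finite_toSet _).biUnion fun _ _ =>
    ((finite_monicsWithConst _ _).prod (finite_monicsWithConst _ _)).image _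

theorem ncard_splitProducts_le (n : ℕ) (a b : R) :
    (splitProducts n a b).ncard ≤ (n - 1) * Nat.card R ^ (n - 2) := by
  refine (ncard_biUnion_le_card_mul (n := Nat.card R ^ (n - 2)) fun k hk => ?_).trans_eq (by simp)
  obtain ⟨hk₀, hkn⟩ := Finset.mem_Ioo.mp hk
  calc _ ≤ (monicsWithConst R k a ×ˢ monicsWithConst R (n - k) b).ncard :=
        Set.ncard_image_le ((finite_monicsWithConst _ _).prod (finite_monicsWithConst _ _))
    _ = (monicsWithConst R k a).ncard * (monicsWithConst R (n - k) b).ncard := Set.ncard_prod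
    _ ≤ Nat.card R ^ (k - 1) * Nat.card R ^ (n - k - 1) := by
        gcongr <;> exact ncard_monicsWithConst_le _ _
    _ = Nat.card R ^ (n - 2) := by rw [← pow_add]; congr 1; omega

end PrescribedFactors

section SpecialLinear

open Matrix Polynomial

variable {K : Type*} [Field K]

theorem charpoly_mem_splitProducts {n : ℕ} (M : SpecialLinearGroup (Fin n) K) {q : K[X]}
    (hq : q.Monic) (hpos : 0 < q.natDegree) (hlt : q.natDegree < n)
    (hdvd : q ∣ (M : Matrix (Fin n) (Fin n) K).charpoly) :
    (M : Matrix (Fin n) (Fin n) K).charpoly ∈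
      splitProducts n (q.coeff 0) ((-1) ^ n * (q.coeff 0)⁻¹) := by
  obtain ⟨r, hr⟩ := hdvd
  have monic_r : r.Monic := hq.of_mul_monic_left (hr ▸ charpoly_monic _)
  have degree_r : r.natDegree = n - q.natDegree := by
    have := charpoly_natDegree_eq_dim (M : Matrix (Fin n) (Fin n) K)
    rw [hr, hq.natDegree_mul monic_r, Fintype.card_fin] at this
    omega
  have det_eq : (-1) ^ n * (q.coeff 0 * r.coeff 0) = 1 := by
    have := det_eq_sign_charpoly_coeff (M : Matrix (Fin n) (Fin n) K)
    rwa [hr, M.det_coe, mul_coeff_zero, Fintype.card_fin, eq_comm] at this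
  have hq₀ : q.coeff 0 ≠ 0 := by
    intro h
    simp [h] at det_eq
  have coeff_r : r.coeff 0 = (-1) ^ n * (q.coeff 0)⁻¹ := by
    rw [eq_mul_inv_iff_mul_eq₀ hq₀, mul_comm, eq_comm]
    calc (-1 : K) ^ n = (-1) ^ n * ((-1) ^ n * (q.coeff 0 * r.coeff 0)) := by rw [det_eq, mul_one]
      _ = q.coeff 0 * r.coeff 0 := by rw [← mul_assoc, ← mul_pow]; simp
  simp only [splitProducts, Set.mem_iUnion]
  exact ⟨q.natDegree, Finset.mem_Ioo.mpr ⟨hpos, hlt⟩, (q, r),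
    ⟨⟨hq, rfl, rfl⟩, monic_r, degree_r, coeff_r⟩, hr.symm⟩

end SpecialLinear

theorem stmt7_general {K : Type*} [Field K] [Finite K] (n : ℕ) (hn : 2 ≤ n) (a : K) :
    Set.ncard {M : Matrix.SpecialLinearGroup (Fin n) K |
        ∃ q : Polynomial K, q.Monic ∧ 0 < q.natDegree ∧ q.natDegree < n ∧ q.coeff 0 = a ∧
          q ∣ Matrix.charpoly (M : Matrix (Fin n) (Fin n) K)} ≤
      n * (n - 1) * Nat.card K ^ (n ^ 2 - 2) := by
  have : Nonempty (Fin n) := ⟨⟨0, by omega⟩⟩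
  have : Finite (Matrix.SpecialLinearGroup (Fin n) K) := Subtype.finite
  calc _ ≤ n * Nat.card K ^ (n ^ 2 - n) * (splitProducts n a ((-1) ^ n * a⁻¹)).ncard := by
        refine ncard_le_mul_ncard_of_mapsTo (Set.toFinite _) (finite_splitProducts _ _ _)
          (f := fun M : Matrix.SpecialLinearGroup (Fin n) K => M.1.charpoly) ?_ fun f _ => ?_
        · rintro M ⟨q, hq, hpos, hlt, rfl, hdvd⟩
          exact charpoly_mem_splitProducts M hq hpos hlt hdvd
        · refine (Set.ncard_le_ncard_of_injOn (t := {M | M.charpoly = f}) Subtype.val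
            (fun M hM => hM.2) Subtype.val_injective.injOn).trans ?_
          simpa using ncard_charpoly_eq_le (ι := Fin n) f
    _ ≤ n * Nat.card K ^ (n ^ 2 - n) * ((n - 1) * Nat.card K ^ (n - 2)) := by
        gcongr
        exact ncard_splitProducts_le n _ _
    _ = n * (n - 1) * Nat.card K ^ (n ^ 2 - 2) := by
        have : n ≤ n ^ 2 := Nat.le_self_pow two_ne_zero n
        rw [mul_mul_mul_comm, ← pow_add]
        congr 2
        omega

/-- the number of matrices in `SL(n, ZMod p)` whose
characteristic polynomial has a monic proper factor with constant coefficient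
`1` is `O(p^{n²-2})`, uniformly in the prime `p`; since
`|SL(n, ZMod p)| ~ p^{n²-1}`, the probability of this event is `O(1/p)`. -/
theorem stmt7 (n : ℕ) (hn : 2 ≤ n) :
    ∃ C : ℝ, 0 < C ∧ ∀ p : ℕ, p.Prime →
      (Set.ncard {M : Matrix.SpecialLinearGroup (Fin n) (ZMod p) |
          ∃ q : Polynomial (ZMod p), q.Monic ∧ 0 < q.natDegree ∧
            q.natDegree < n ∧ q.coeff 0 = 1 ∧
            q ∣ Matrix.charpoly (M : Matrix (Fin n) (Fin n) (ZMod p))} : ℝ)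
        ≤ C * (p : ℝ) ^ (n ^ 2 - 2) := by
  refine ⟨(n * (n - 1) : ℕ), by exact_mod_cast Nat.mul_pos (by omega) (by omega), fun p hp => ?_⟩
  have := Fact.mk hp
  exact_mod_cast Nat.card_zmod p ▸ stmt7_general n hn (1 : ZMod p)
end
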